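/- arXiv:2109.14497 — 5 statements merged into one kernel-verified Lean document; each statement's English description precedes it below -/
import Mathlib

section
/- For 0 ≤ h < i ≤ n, there exists a valid partition of the prefix (l_1, …, l_i) whose last block is (l_{h+1}, …, l_i) if and only if x_h + y_h ≤ x_i. -/
/-- `pSum L i` is `x_i`: the sum of the first `i` elements of `L` (so `pSum L 0 = 0`). -/
def pSum (L : List ℝ) (i : ℕ) : ℝ := (L.take i).sum

/-- A valid partition of `L`: a partition of `L` into nonempty consecutive blocks
whose totals are non-decreasing from left to right. -/
def ValidPartition (L : List ℝ) (P : List (List ℝ)) : Prop :=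
  P.flatten = L ∧ (∀ B ∈ P, B ≠ []) ∧ List.Chain' (· ≤ ·) (P.map List.sum)

/-- The total of the last block of a partition (`0` for the empty partition). -/
def lastTotal (P : List (List ℝ)) : ℝ := (P.map List.sum).getLastD 0

/-- `wrapLen L` is the wrapping length `y_{|L|}`: the minimum, over all valid
partitions of `L`, of the total of the last block (with `wrapLen [] = 0`,
realized by the empty partition). -/
noncomputable def wrapLen (L : List ℝ) : ℝ :=
  sInf {t | ∃ P, ValidPartition L P ∧ lastTotal P = t}

theorem vp_append (A B : List ℝ) (Q : List (List ℝ)) (hB : B ≠ []) (hs : 0 ≤ B.sum) :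
    ValidPartition (A ++ B) (Q ++ [B]) ↔ ValidPartition A Q ∧ lastTotal Q ≤ B.sum := by
  have key : List.IsChain (· ≤ ·) ((Q ++ [B]).map List.sum) ↔
      List.IsChain (· ≤ ·) (Q.map List.sum) ∧ lastTotal Q ≤ B.sum := by
    rw [List.map_append, List.isChain_append]
    unfold lastTotal
    rcases List.eq_nil_or_concat (Q.map List.sum) with h | ⟨l, a, h⟩
    · rw [h]; simp [hs]
    · rw [h]; simp
  unfold ValidPartition
  change (_ ∧ _ ∧ List.IsChain _ _) ↔ (_ ∧ _ ∧ List.IsChain _ _) ∧ _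
  rw [key]
  have h1 : (Q ++ [B]).flatten = A ++ B ↔ Q.flatten = A := by simp
  have h2 : (∀ C ∈ Q ++ [B], C ≠ []) ↔ (∀ C ∈ Q, C ≠ []) := by
    constructor
    · intro h C hC
      exact h C (by simp [hC])
    · intro h C hC
      rcases List.mem_append.1 hC with h' | h'
      · exact h C h'
      · rw [List.mem_singleton.1 h']; exact hB
  rw [h1, h2]
  tauto

theorem wl_finite (A : List ℝ) : {t | ∃ P, ValidPartition A P ∧ lastTotal P = t}.Finite := by
  refine ((List.finite_toSet A.tails).image List.sum).subset ?_
  rintro t ⟨P, hP, rfl⟩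
  rcases List.eq_nil_or_concat P with h | ⟨Q, B, h⟩
  · subst h
    exact ⟨[], by simp, by simp [lastTotal]⟩
  · subst h
    refine ⟨B, ?_, by simp [lastTotal]⟩
    have := hP.1
    simp only [Set.mem_setOf_eq, List.mem_tails]
    exact ⟨Q.flatten, by simpa using this⟩

theorem wl_nonempty (A : List ℝ) : {t | ∃ P, ValidPartition A P ∧ lastTotal P = t}.Nonempty := by
  by_cases hA : A = []
  · subst hA
    exact ⟨_, [], ⟨by simp, by simp, List.isChain_nil⟩, rfl⟩
  · exact ⟨_, [A], ⟨by simp, by simpa using hA, List.isChain_singleton _⟩, rfl⟩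

/-- For `0 ≤ h < i ≤ n`, there exists a valid partition of the prefix
`(l_1, …, l_i)` whose last block is `(l_{h+1}, …, l_i)` if and only if
`x_h + y_h ≤ x_i`. -/
theorem stmt_1 (L : List ℝ) (hL : ∀ l ∈ L, 0 < l) (h i : ℕ) (hhi : h < i)
    (hin : i ≤ L.length) :
    (∃ P, ValidPartition (L.take i) P ∧ P.getLast? = some ((L.take i).drop h)) ↔
      pSum L h + wrapLen (L.take h) ≤ pSum L i := by
  set A := L.take h with hA
  set B := (L.take i).drop h with hBdef
  have hAB : L.take i = A ++ B := by
    have := List.take_append_drop h (L.take i)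
    rw [List.take_take, min_eq_left hhi.le] at this
    exact this.symm
  have hB : B ≠ [] := by
    intro h0
    have := congrArg List.length h0
    simp [hBdef] at this
    omega
  have hs : 0 ≤ B.sum := by
    apply List.sum_nonneg
    intro x hx
    exact (hL x (List.mem_of_mem_take (List.mem_of_mem_drop hx))).le
  have hx : pSum L i = pSum L h + B.sum := by
    unfold pSum
    rw [hAB, List.sum_append]
  rw [hx, add_le_add_iff_left, hAB]
  constructor
  · rintro ⟨P, hP, hlast⟩
    obtain ⟨Q, rfl⟩ := List.getLast?_eq_some_iff.1 hlast
    obtain ⟨h1, h2⟩ := (vp_append A B Q hB hs).1 hP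
    exact (csInf_le (wl_finite A).bddBelow ⟨Q, h1, rfl⟩).trans h2
  · intro hle
    obtain ⟨Q, h1, h2⟩ := (wl_nonempty A).csInf_mem (wl_finite A)
    refine ⟨Q ++ [B], (vp_append A B Q hB hs).2 ⟨h1, ?_⟩, by simp⟩
    rw [h2]
    exact hle
end

section
/- If 0 ≤ h < i ≤ n and x_h + y_h ≤ x_i, then y_i ≤ x_i − x_h. -/
lemma lastTotal_append (Q : List (List ℝ)) (B : List ℝ) : lastTotal (Q ++ [B]) = B.sum := by
  simp [lastTotal]

lemma wrap_finite (L : List ℝ) : {t | ∃ P, ValidPartition L P ∧ lastTotal P = t}.Finite := by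
  apply ((Set.finite_Iic L.length).image (fun k => (L.drop k).sum)).subset
  rintro t ⟨P, ⟨hf, -, -⟩, rfl⟩
  rcases List.eq_nil_or_concat P with rfl | ⟨Q, B, rfl⟩
  · exact ⟨L.length, by simp, by simp [lastTotal]⟩
  · refine ⟨Q.flatten.length, ?_, ?_⟩
    · rw [← hf, Set.mem_Iic]; simp
    · simp only [List.concat_eq_append] at hf ⊢
      rw [lastTotal_append, ← hf]
      simp only [List.flatten_append, List.flatten_singleton, List.drop_left]

lemma wrap_nonempty (L : List ℝ) : {t | ∃ P, ValidPartition L P ∧ lastTotal P = t}.Nonempty := by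
  by_cases hL : L = []
  · exact ⟨_, [], ⟨by simp [hL], by simp, List.IsChain.nil⟩, rfl⟩
  · exact ⟨_, [L], ⟨by simp, by simpa using hL, List.IsChain.singleton _⟩, rfl⟩

/-- If `0 ≤ h < i ≤ n` and `x_h + y_h ≤ x_i`, then `y_i ≤ x_i − x_h`. -/
theorem stmt_2 (L : List ℝ) (hL : ∀ l ∈ L, 0 < l) (h i : ℕ) (hhi : h < i)
    (hin : i ≤ L.length) (hfold : pSum L h + wrapLen (L.take h) ≤ pSum L i) :
    wrapLen (L.take i) ≤ pSum L i - pSum L h := by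
  obtain ⟨P, ⟨hf, hne, hc⟩, hP⟩ := (wrap_nonempty (L.take h)).csInf_mem (wrap_finite (L.take h))
  change lastTotal P = wrapLen (L.take h) at hP
  have happ : L.take h ++ (L.take i).drop h = L.take i := by
    have := List.take_append_drop h (L.take i)
    rwa [List.take_take, min_eq_left hhi.le] at this
  have hsum : pSum L h + ((L.take i).drop h).sum = pSum L i := by
    unfold pSum
    rw [← List.sum_append, happ]
  have hle : lastTotal P ≤ ((L.take i).drop h).sum := by linarith
  apply csInf_le (wrap_finite _).bddBelow
  refine ⟨P ++ [(L.take i).drop h], ⟨?_, ?_, ?_⟩, ?_⟩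
  · simp only [List.flatten_append, List.flatten_singleton, hf, happ]
  · intro B hB
    rcases List.mem_append.1 hB with hB | hB
    · exact hne B hB
    · rw [List.mem_singleton.1 hB]
      intro h0
      have := congrArg List.length h0
      simp at this
      omega
  · rw [List.map_append]
    refine List.isChain_append.2 ⟨hc, by simp, ?_⟩
    intro x hx y hy
    simp only [List.map_cons, List.map_nil, List.head?_cons, Option.mem_def,
      Option.some.injEq] at hy
    rw [← hy]
    have : lastTotal P = x := by
      unfold lastTotal
      rw [List.getLastD_eq_getLast?, Option.mem_def.1 hx]; rfl
    linarith
  · rw [lastTotal_append]; linarith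
end

section
/- (Corollary 1, combinatorial core) The partition Π(L) has the maximum possible number of blocks: for every valid partition of L into k' blocks, the number of blocks of Π(L) is at least k'. -/
open Classical in
/-- The recursively defined partition `Π(L)`: for a nonempty `L` of length `i`,
let `h` be the largest index `0 ≤ h < i` with `x_h + y_h ≤ x_i`, take
`(l_{h+1}, …, l_i)` as the last block, and recurse on `(l_1, …, l_h)`. -/
noncomputable def piPart (L : List ℝ) : List (List ℝ) :=
  if L.length = 0 then []
  else
    let h := Nat.findGreatest
      (fun h => pSum L h + wrapLen (L.take h) ≤ pSum L L.length) (L.length - 1)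
    piPart (L.take h) ++ [L.drop h]
termination_by L.length
decreasing_by
  have hle : Nat.findGreatest
      (fun h => pSum L h + wrapLen (L.take h) ≤ pSum L L.length) (L.length - 1)
      ≤ L.length - 1 := Nat.findGreatest_le _
  simp only [List.length_take]
  omega

open Classical in
noncomputable def cutIdx (L : List ℝ) : ℕ :=
  Nat.findGreatest
      (fun h => pSum L h + wrapLen (L.take h) ≤ pSum L L.length) (L.length - 1)

theorem piPart_length (L : List ℝ) (h : L ≠ []) :
    (piPart L).length = (piPart (L.take (cutIdx L))).length + 1 := by
  rw [piPart]
  have : L.length ≠ 0 := by simpa using h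
  rw [if_neg this]
  simp [cutIdx]

theorem piPart_nil : piPart [] = [] := by
  rw [piPart]
  exact if_pos rfl

theorem cutIdx_lt (L : List ℝ) (h : L ≠ []) : cutIdx L < L.length := by
  have h0 : 0 < L.length := List.length_pos_iff.2 h
  have : cutIdx L ≤ L.length - 1 := by
    unfold cutIdx
    exact Nat.findGreatest_le _
  omega

theorem le_cutIdx (L : List ℝ) (g : ℕ) (hg : g < L.length)
    (h : pSum L g + wrapLen (L.take g) ≤ L.sum) : g ≤ cutIdx L := by
  unfold cutIdx
  apply Nat.le_findGreatest (by omega)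
  simpa [pSum] using h

theorem cutIdx_spec (L : List ℝ) (h : cutIdx L ≠ 0) :
    pSum L (cutIdx L) + wrapLen (L.take (cutIdx L)) ≤ L.sum := by
  have := Nat.findGreatest_of_ne_zero (n := L.length - 1) (m := cutIdx L)
    (P := fun h => pSum L h + wrapLen (L.take h) ≤ pSum L L.length) (by unfold cutIdx; congr) h
  simpa [pSum] using this

theorem piPart_mono : ∀ (n : ℕ) (A C : List ℝ), A.length ≤ n → (∀ l ∈ A ++ C, 0 < l) →
    (piPart A).length ≤ (piPart (A ++ C)).length := by
  intro n
  induction n with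
  | zero =>
    intro A C hA _
    have : A = [] := by simpa using hA
    subst this
    rw [piPart_nil]; simp only [List.length_nil, Nat.zero_le]
  | succ n ih =>
    intro A C hA hpos
    by_cases hne : A = []
    · subst hne
      rw [piPart_nil]; simp only [List.length_nil, Nat.zero_le]
    have hne2 : A ++ C ≠ [] := by simp [hne]
    rw [piPart_length A hne, piPart_length _ hne2]
    have hlt := cutIdx_lt A hne
    have hle : cutIdx A ≤ cutIdx (A ++ C) := by
      by_cases h0 : cutIdx A = 0
      · omega
      have hs := cutIdx_spec A h0
      have hC : 0 ≤ C.sum := List.sum_nonneg fun x hx => (hpos x (by simp [hx])).le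
      apply le_cutIdx
      · simp; omega
      · unfold pSum at *
        rw [List.take_append_of_le_length hlt.le, List.sum_append]
        linarith
    have key : (A ++ C).take (cutIdx (A ++ C)) =
        A.take (cutIdx A) ++ ((A ++ C).take (cutIdx (A ++ C))).drop (cutIdx A) := by
      conv_lhs => rw [← List.take_append_drop (cutIdx A) ((A ++ C).take (cutIdx (A ++ C)))]
      rw [List.take_take, min_eq_left hle, List.take_append_of_le_length hlt.le]
    have := ih (A.take (cutIdx A)) (((A ++ C).take (cutIdx (A ++ C))).drop (cutIdx A))
      (by simp; omega) (by
        rw [← key]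
        intro l hl
        exact hpos l (List.mem_of_mem_take hl))
    rw [← key] at this
    omega

theorem lastTotal_nonneg (L : List ℝ) (hL : ∀ l ∈ L, 0 < l) (P : List (List ℝ))
    (h : P.flatten = L) : 0 ≤ lastTotal P := by
  rcases List.eq_nil_or_concat P with rfl | ⟨Q, B, rfl⟩
  · simp [lastTotal]
  · simp only [lastTotal, List.map_append, List.map_cons, List.map_nil, List.concat_eq_append,
      List.getLastD_eq_getLast?, List.getLast?_append]
    simp
    apply List.sum_nonneg
    intro x hx
    exact (hL x (by rw [← h]; simp [hx])).le

theorem wrapLen_le (L : List ℝ) (hL : ∀ l ∈ L, 0 < l) (P : List (List ℝ))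
    (h : ValidPartition L P) : wrapLen L ≤ lastTotal P := by
  apply csInf_le
  · refine ⟨0, ?_⟩
    rintro t ⟨P, hP, rfl⟩
    exact lastTotal_nonneg L hL P hP.1
  · exact ⟨P, h, rfl⟩

theorem stmt_aux (P : List (List ℝ)) : ∀ L : List ℝ, (∀ l ∈ L, 0 < l) →
    ValidPartition L P → P.length ≤ (piPart L).length := by
  induction P using List.reverseRecOn with
  | nil => simp
  | append_singleton Q B ih =>
    rintro L hL ⟨h1, h2, h3⟩
    have hB : B ≠ [] := h2 B (by simp)
    have hLe : L = Q.flatten ++ B := by rw [← h1]; simp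
    have hQpos : ∀ l ∈ Q.flatten, 0 < l := fun l hl => hL l (by rw [hLe]; simp only [List.mem_append]; exact Or.inl hl)
    have hBs : 0 ≤ B.sum := List.sum_nonneg fun x hx => (hL x (by rw [hLe]; simp [hx])).le
    rw [List.map_append] at h3
    have h3' := List.isChain_append.1 h3
    have hQ : ValidPartition Q.flatten Q := ⟨rfl, fun b hb => h2 b (by simp [hb]), h3'.1⟩
    have hlast : lastTotal Q ≤ B.sum := by
      unfold lastTotal
      rw [List.getLastD_eq_getLast?]
      cases hc : (Q.map List.sum).getLast? with
      | none => simpa using hBs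
      | some v => exact h3'.2.2 v hc B.sum (by simp)
    have hw := wrapLen_le _ hQpos Q hQ
    have hBl : 0 < B.length := List.length_pos_iff.2 hB
    have hLne : L ≠ [] := by rw [hLe]; simp only [ne_eq, List.append_eq_nil_iff, not_and]; exact fun _ => hB
    have hg : Q.flatten.length ≤ cutIdx L := by
      apply le_cutIdx
      · rw [hLe, List.length_append]; omega
      · rw [hLe, pSum, List.take_left, List.sum_append]
        linarith
    have hIH := ih _ hQpos hQ
    have key : L.take (cutIdx L) = Q.flatten ++ (L.take (cutIdx L)).drop Q.flatten.length := by
      conv_lhs => rw [← List.take_append_drop Q.flatten.length (L.take (cutIdx L))]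
      rw [List.take_take, min_eq_left hg]
      congr 1
      rw [hLe, List.take_left]
    have hm := piPart_mono _ Q.flatten ((L.take (cutIdx L)).drop Q.flatten.length) le_rfl (by
      rw [← key]
      intro l hl
      exact hL l (List.mem_of_mem_take hl))
    rw [← key] at hm
    rw [piPart_length L hLne, List.length_append]
    simp only [List.length_singleton]
    omega

/-- Corollary 1, combinatorial core: The partition `Π(L)` has the
maximum possible number of blocks: every valid partition of `L` into `k'` blocks
satisfies `k' ≤ |Π(L)|`. -/
theorem stmt_7 (L : List ℝ) (hL : ∀ l ∈ L, 0 < l) :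
    ∀ P', ValidPartition L P' → P'.length ≤ (piPart L).length := by
  exact fun P' h => stmt_aux P' L hL h
end

section
/- The unconstrained wrapping length satisfies W(L) = min over 0 ≤ i < n of max(y_i, x_n − x_i). In particular W(L) ≤ y_n. -/
/-- The unconstrained wrapping length `W(L)`: the minimum, over all partitions of
`L` into nonempty consecutive blocks `B_1, …, B_k` (`k ≥ 1`) whose totals satisfy
`t_1 ≤ ⋯ ≤ t_{k−1}` (the last total `t_k` unconstrained), of `max (t_{k−1}, t_k)`
(interpreted as `t_1` when `k = 1`; here `t_0` is read as `0`, which for positive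
lengths gives `max (0, t_1) = t_1`). -/
noncomputable def uWrap (L : List ℝ) : ℝ :=
  sInf {c | ∃ P : List (List ℝ), P ≠ [] ∧ P.flatten = L ∧ (∀ B ∈ P, B ≠ []) ∧
    List.Chain' (· ≤ ·) ((P.map List.sum).dropLast) ∧
    c = max ((P.map List.sum).dropLast.getLastD 0) (lastTotal P)}

theorem aux_nonneg (P : List (List ℝ)) (h : ∀ l ∈ P.flatten, 0 < l) : 0 ≤ lastTotal P := by
  rcases List.eq_nil_or_concat P with rfl | ⟨Q, B, rfl⟩
  · simp [lastTotal]
  · have : lastTotal (Q ++ [B]) = B.sum := by simp [lastTotal, List.getLastD_eq_getLast?]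
    rw [List.concat_eq_append] at *
    rw [this]
    apply List.sum_nonneg
    intro x hx
    exact (h x (by simp [hx])).le

theorem aux_mem (L : List ℝ) (Q : List (List ℝ)) (B A : List ℝ) (hB : B ≠ [])
    (hQ : ValidPartition A Q) (hAB : A ++ B = L) (hL : ∀ l ∈ L, 0 < l) :
    uWrap L ≤ max (lastTotal Q) B.sum := by
  apply csInf_le
  · refine ⟨0, ?_⟩
    rintro c ⟨P, -, hP, -, -, rfl⟩
    exact le_max_of_le_right (aux_nonneg P (by rw [hP]; exact hL))
  · obtain ⟨h1, h2, h3⟩ := hQ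
    refine ⟨Q ++ [B], by simp, by simp [h1, hAB], ?_, ?_, ?_⟩
    · intro C hC
      rcases List.mem_append.1 hC with h | h
      · exact h2 C h
      · rw [List.mem_singleton.1 h]; exact hB
    · simpa using h3
    · simp [lastTotal, List.getLastD_eq_getLast?]

theorem aux_valid_ex (A : List ℝ) : ∃ Q, ValidPartition A Q := by
  by_cases h : A = []
  · exact ⟨[], by simp [h, ValidPartition, List.Chain']⟩
  · exact ⟨[A], by simp [h, ValidPartition, List.Chain']⟩

theorem aux_bdd (A : List ℝ) (hA : ∀ l ∈ A, 0 < l) :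
    BddBelow {t | ∃ P, ValidPartition A P ∧ lastTotal P = t} := by
  refine ⟨0, ?_⟩
  rintro t ⟨P, hP, rfl⟩
  exact aux_nonneg P (by rw [hP.1]; exact hA)

theorem stmt_10 (L : List ℝ) (hL : ∀ l ∈ L, 0 < l) (hne : L ≠ []) :
    uWrap L =
      sInf {c | ∃ i < L.length,
        c = max (wrapLen (L.take i)) (L.sum - pSum L i)} ∧
    uWrap L ≤ wrapLen L := by
  have hlen : 0 < L.length := List.length_pos_iff.2 hne
  have hsum : ∀ i, L.sum - pSum L i = (L.drop i).sum := by
    intro i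
    have := List.sum_take_add_sum_drop L i
    unfold pSum
    linarith
  refine ⟨le_antisymm ?_ ?_, ?_⟩
  · refine le_csInf ⟨_, 0, hlen, rfl⟩ ?_
    rintro c ⟨i, hi, rfl⟩
    rw [hsum]
    have key : ∀ Q, ValidPartition (L.take i) Q →
        uWrap L ≤ max (lastTotal Q) (L.drop i).sum := fun Q hQ =>
      aux_mem L Q _ _ (by simpa using hi) hQ (List.take_append_drop i L) hL
    by_cases hc : uWrap L ≤ (L.drop i).sum
    · exact le_max_of_le_right hc
    · apply le_max_of_le_left
      obtain ⟨Q, hQ⟩ := aux_valid_ex (L.take i)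
      refine le_csInf ⟨_, Q, hQ, rfl⟩ ?_
      rintro t ⟨P, hP, rfl⟩
      exact (le_max_iff.1 (key P hP)).resolve_right hc
  · apply le_csInf
    · exact ⟨_, [L], by simp, by simp, by simpa using hne, by simp [List.Chain'], rfl⟩
    rintro c ⟨P, hP0, hP, hPn, hch, rfl⟩
    rcases List.eq_nil_or_concat P with rfl | ⟨Q, B, rfl⟩
    · exact absurd rfl hP0
    rw [List.concat_eq_append] at *
    have hB : B ≠ [] := hPn B (by simp)
    have hQB : Q.flatten ++ B = L := by simpa using hP
    have hBl : 0 < B.length := List.length_pos_iff.2 hB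
    have ht : L.take Q.flatten.length = Q.flatten := by rw [← hQB]; exact List.take_left
    have hd : L.drop Q.flatten.length = B := by rw [← hQB]; exact List.drop_left
    have hv : ValidPartition Q.flatten Q :=
      ⟨rfl, fun C hC => hPn C (by simp [hC]), by simpa using hch⟩
    have hlt : Q.flatten.length < L.length := by
      rw [← hQB, List.length_append]; omega
    refine le_trans (csInf_le ?_ ⟨Q.flatten.length, hlt, rfl⟩) ?_
    · refine ⟨0, ?_⟩
      rintro c ⟨i, hi, rfl⟩
      rw [hsum]
      exact le_max_of_le_right
        (List.sum_nonneg fun x hx => (hL x (List.mem_of_mem_drop hx)).le)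
    · rw [hsum, ht, hd]
      have hw : wrapLen Q.flatten ≤ lastTotal Q :=
        csInf_le (aux_bdd _ fun l hl => hL l (by rw [← hQB]; exact List.mem_append_left _ hl))
          ⟨Q, hv, rfl⟩
      have e1 : lastTotal (Q ++ [B]) = B.sum := by simp [lastTotal, List.getLastD_eq_getLast?]
      have e2 : ((Q ++ [B]).map List.sum).dropLast.getLastD 0 = lastTotal Q := by
        simp [lastTotal]
      rw [e1, e2]
      exact max_le_max_right _ hw
  · obtain ⟨Q0, hQ0⟩ := aux_valid_ex L
    refine le_csInf ⟨_, Q0, hQ0, rfl⟩ ?_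
    rintro t ⟨P, ⟨hP, hPn, hch⟩, rfl⟩
    rcases List.eq_nil_or_concat P with rfl | ⟨Q, B, rfl⟩
    · exact absurd hP.symm (by simpa using hne)
    rw [List.concat_eq_append] at *
    have hB : B ≠ [] := hPn B (by simp)
    have hQB : Q.flatten ++ B = L := by simpa using hP
    rw [List.map_append] at hch
    obtain ⟨c1, c2, c3⟩ := List.isChain_append.1 hch
    have hv : ValidPartition Q.flatten Q :=
      ⟨rfl, fun C hC => hPn C (by simp [hC]), c1⟩
    have h := aux_mem L Q B _ hB hv hQB hL
    have e1 : lastTotal (Q ++ [B]) = B.sum := by simp [lastTotal, List.getLastD_eq_getLast?]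
    rw [e1]
    refine h.trans (max_le ?_ le_rfl)
    have hBs : 0 ≤ B.sum :=
      List.sum_nonneg fun x hx => (hL x (by rw [← hQB]; exact List.mem_append_right _ hx)).le
    unfold lastTotal
    rw [List.getLastD_eq_getLast?]
    cases hq : (Q.map List.sum).getLast? with
    | none => simpa using hBs
    | some a => exact c3 a (by simp [hq]) B.sum (by simp)
end

section
/- The greedy algorithm has unbounded approximation ratio: for every constant C > 0 there exists a nonempty finite sequence L of positive integers such that the total of the last block of the greedy partition G(L) is strictly greater than C times y_n, the minimum last-block total over all valid partitions of L. -/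
open Classical in
/-- The greedy ("fold whenever possible") partition of `L`, where `t` is the total
of the previously formed block (initially `t = 0`): the next block is the shortest
nonempty prefix of the remaining elements whose total is at least `t`, or all of
the remaining elements if no such prefix exists. `G(L) = greedy 0 L`. -/
noncomputable def greedy (t : ℝ) (L : List ℝ) : List (List ℝ) :=
  if L.length = 0 then []
  else if h : ∃ m, 1 ≤ m ∧ m ≤ L.length ∧ t ≤ (L.take m).sum then
    (L.take (Nat.find h)) :: greedy (L.take (Nat.find h)).sum (L.drop (Nat.find h))
  else [L]
termination_by L.length
decreasing_by
  have h1 := (Nat.find_spec h).1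
  simp only [List.length_drop]
  omega

theorem greedy_step (t b : ℝ) (A R : List ℝ) (hA : ∀ a ∈ A, 0 ≤ a)
    (h1 : A = [] ∨ A.sum < t) (h2 : t ≤ A.sum + b) :
    greedy t (A ++ b :: R) = (A ++ [b]) :: greedy (A.sum + b) R := by
  classical
  have htake : (A ++ b :: R).take (A.length + 1) = A ++ [b] := by
    simp [List.take_append]
  have hdrop : (A ++ b :: R).drop (A.length + 1) = R := by
    simp [List.drop_append]
  have h : ∃ m, 1 ≤ m ∧ m ≤ (A ++ b :: R).length ∧ t ≤ ((A ++ b :: R).take m).sum := by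
    refine ⟨A.length + 1, by omega, by simp, ?_⟩
    rw [htake]; simpa using h2
  have hf : Nat.find h = A.length + 1 := by
    rw [Nat.find_eq_iff]
    refine ⟨⟨by omega, by simp, ?_⟩, ?_⟩
    · rw [htake]; simpa using h2
    · rintro m hm ⟨m1, -, m3⟩
      rw [List.take_append_of_le_length (by omega)] at m3
      rcases h1 with rfl | h1
      · simp at hm; omega
      · have h4 : (A.take m).sum + (A.drop m).sum = A.sum := by
          rw [← List.sum_append, List.take_append_drop]
        have h5 : 0 ≤ (A.drop m).sum :=
          List.sum_nonneg (fun a ha => hA a (List.mem_of_mem_drop ha))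
        linarith
  rw [greedy, if_neg (by simp), dif_pos h]
  simp only [hf, htake, hdrop]
  simp

/-- The bad sequence, from stage `j`, with `k` stages. -/
noncomputable def badSeq : ℕ → ℕ → List ℝ
  | _, 0 => []
  | j, k + 1 => List.replicate j 3 ++ 2 :: ((1 :: List.replicate j 3) ++ 2 ::
      ((1 :: List.replicate j 3) ++ 3 :: badSeq (j + 1) k))

theorem greedy_bad (k : ℕ) : ∀ (j : ℕ) (t d : ℝ), (j = 0 ∨ 3 * (j : ℝ) < t) →
    t ≤ 3 * j + 2 → (k = 0 → d = 3 * j + 1) →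
    ((greedy t (badSeq j k)).map List.sum).getLastD d = 3 * ((j : ℝ) + k) + 1 := by
  induction k with
  | zero =>
    intro j t d _ _ h
    rw [badSeq, greedy]
    simp [h]
  | succ k ih =>
    intro j t d h1 h2 _
    have e : (List.replicate j (3 : ℝ)).sum = 3 * j := by simp [mul_comm]
    have e1 : (1 :: List.replicate j (3 : ℝ)).sum = 1 + 3 * j := by simp [mul_comm]
    have p : ∀ a ∈ List.replicate j (3 : ℝ), 0 ≤ a := by
      intro a ha; rw [List.eq_of_mem_replicate ha]; norm_num
    have p1 : ∀ a ∈ 1 :: List.replicate j (3 : ℝ), 0 ≤ a := by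
      intro a ha
      rcases List.mem_cons.1 ha with rfl | ha
      · norm_num
      · exact p a ha
    rw [badSeq, greedy_step _ _ _ _ p, greedy_step _ _ _ _ p1, greedy_step _ _ _ _ p1]
    · simp only [List.map_cons, List.getLastD_cons]
      rw [ih (j + 1)]
      · push_cast; ring
      · right; rw [e1]; push_cast; linarith
      · rw [e1]; push_cast; linarith
      · intro _; rw [List.sum_append, e1]; push_cast; simp; ring
    · right; rw [e1]; linarith
    · rw [e1]; linarith
    · right; rw [e1, e]; linarith
    · rw [e1, e]; linarith
    · rcases h1 with rfl | h1
      · left; rfl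
      · right; rw [e]; exact h1
    · rw [e]; exact h2

theorem badSeq_part (k : ℕ) : ∀ j : ℕ, ∃ P : List (List ℝ), P.flatten = badSeq j k ∧
    ∀ B ∈ P, B ≠ [] ∧ B.sum = 3 := by
  induction k with
  | zero => intro j; exact ⟨[], by simp [badSeq]⟩
  | succ k ih =>
    intro j
    obtain ⟨P, hP, hB⟩ := ih (j + 1)
    have hr : ∀ n : ℕ, (List.replicate n [(3 : ℝ)]).flatten = List.replicate n 3 := by
      intro n
      induction n with
      | zero => rfl
      | succ n ih => simp [List.replicate_succ, ih]
    refine ⟨List.replicate j [3] ++ [2, 1] :: (List.replicate j [3] ++ [2, 1] ::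
      (List.replicate j [3] ++ [3] :: P)), ?_, ?_⟩
    · simp [badSeq, hr, hP]
    · intro B hm
      simp only [List.mem_append, List.mem_cons, List.mem_replicate] at hm
      rcases hm with ⟨_, rfl⟩ | rfl | ⟨_, rfl⟩ | rfl | ⟨_, rfl⟩ | rfl | hm
      all_goals first | exact hB _ hm | exact ⟨List.cons_ne_nil _ _, by norm_num⟩

theorem badSeq_mem (k : ℕ) : ∀ j : ℕ, ∀ l ∈ badSeq j k, ∃ n : ℕ, 0 < n ∧ l = (n : ℝ) := by
  induction k with
  | zero => intro j l hl; simp [badSeq] at hl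
  | succ k ih =>
    intro j l hl
    have : l = 1 ∨ l = 2 ∨ l = 3 ∨ l ∈ badSeq (j + 1) k := by
      simp only [badSeq, List.mem_append, List.mem_cons, List.mem_replicate] at hl
      tauto
    rcases this with rfl | rfl | rfl | h
    · exact ⟨1, by norm_num, by norm_num⟩
    · exact ⟨2, by norm_num, by norm_num⟩
    · exact ⟨3, by norm_num, by norm_num⟩
    · exact ih _ _ h

theorem wrapLen_bad (j k : ℕ) : wrapLen (badSeq j k) ≤ 3 := by
  obtain ⟨P, hP, hB⟩ := badSeq_part k j
  have hrep : P.map List.sum = List.replicate P.length 3 := by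
    rw [List.eq_replicate_iff]
    refine ⟨by simp, ?_⟩
    intro b hb
    obtain ⟨B, hm, rfl⟩ := List.mem_map.1 hb
    exact (hB B hm).2
  have hv : ValidPartition (badSeq j k) P := by
    refine ⟨hP, fun B hm => (hB B hm).1, ?_⟩
    rw [hrep]
    apply List.Pairwise.isChain
    rw [List.pairwise_replicate]
    right; exact le_refl _
  have hl : lastTotal P ≤ 3 := by
    rw [lastTotal, hrep]
    cases P.length with
    | zero => simp
    | succ n => simp [List.getLastD_eq_getLast?, List.getLast?_replicate]
  unfold wrapLen
  by_cases hb : BddBelow {t | ∃ P, ValidPartition (badSeq j k) P ∧ lastTotal P = t}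
  · exact (csInf_le hb ⟨P, hv, rfl⟩).trans hl
  · rw [Real.sInf_of_not_bddBelow hb]; norm_num

/-- The greedy algorithm has unbounded approximation ratio: for
every constant `C > 0` there is a nonempty finite sequence `L` of positive
integers such that the total of the last block of the greedy partition `G(L)` is
strictly greater than `C` times `y_n`, the minimum last-block total over all
valid partitions of `L`. -/
theorem stmt_13 (C : ℝ) (hC : 0 < C) :
    ∃ L : List ℝ, L ≠ [] ∧ (∀ l ∈ L, ∃ k : ℕ, 0 < k ∧ l = (k : ℝ)) ∧
      C * wrapLen L < lastTotal (greedy 0 L) := by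
  obtain ⟨k, hk⟩ := exists_nat_gt C
  refine ⟨badSeq 0 (k + 1), by simp [badSeq], badSeq_mem _ _, ?_⟩
  have h := greedy_bad (k + 1) 0 0 0 (Or.inl rfl) (by norm_num) (by simp)
  rw [lastTotal, h]
  have := mul_le_mul_of_nonneg_left (wrapLen_bad 0 (k + 1)) hC.le
  push_cast
  linarith
end
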